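/- Let α, β ∈ ℂ with α, β ∉ {1, 3, 5, …}. If α + β = 2 − n, then M^α M^β = I, the identity operator, on the space D_e(S^{n-1}) of even C^∞ functions (equivalently, m_{j,α} m_{j,β} = 1 for all even j). -/

import Mathlib

/-!
STATEMENT 2: Let α, β ∈ ℂ with α, β ∉ {1, 3, 5, …}. If α + β = 2 − n, then
M^α M^β = I on the space D_e(S^{n-1}) of even C^∞ functions (equivalently,
m_{j,α} m_{j,β} = 1 for all even j).

The analytically continued generalized cosine transforms M^α are modeled by a
`CosineFamily`: a family of operators given by the defining integral for Re α > 0 and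
analytic in α off {1,3,5,…}; these properties determine the family uniquely on smooth
functions.
-/

open MeasureTheory Metric Complex
open scoped RealInnerProductSpace

noncomputable section

/-- Euclidean space `ℝ^n`. -/
abbrev Euc (n : ℕ) := EuclideanSpace ℝ (Fin n)

/-- The unit sphere `S^{n-1} ⊂ ℝ^n`. -/
abbrev Sph (n : ℕ) := Metric.sphere (0 : Euc n) 1

/-- The rotation-invariant surface measure on the unit sphere `S^{n-1}`;
the normalized measure `dθ` is its normalization `⨍ … ∂(sphMeasure n)`. -/
def sphMeasure (n : ℕ) : Measure (Sph n) := (volume : Measure (Euc n)).toSphere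

/-- A function on the sphere is (infinitely) smooth if it extends to a `C^∞`
function on the ambient space; this realizes the space `D(S^{n-1})` of test functions. -/
def SmoothSph {n : ℕ} {V : Type*} [NormedAddCommGroup V] [NormedSpace ℝ V]
    (f : Sph n → V) : Prop :=
  ∃ F : Euc n → V, ContDiff ℝ (⊤ : ℕ∞) F ∧ ∀ x : Sph n, f x = F x

/-- An even function on the sphere. -/
def EvenSph {n : ℕ} {V : Type*} (f : Sph n → V) : Prop := ∀ x : Sph n, f (-x) = f x

/-- `σ_k`, the surface area of the sphere `S^k`:  `2 π^{(k+1)/2} / Γ((k+1)/2)`. -/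
def sigmaS (k : ℕ) : ℝ := 2 * Real.pi ^ (((k : ℝ) + 1) / 2) / Real.Gamma (((k : ℝ) + 1) / 2)

/-- `α ∈ {1, 3, 5, …}`. -/
def IsPosOdd (α : ℂ) : Prop := ∃ k : ℕ, α = 2 * k + 1

/-- The normalizing constant `γ_n(α) = σ_{n-1} Γ((1-α)/2) / (2 π^{(n-1)/2} Γ(α/2))`. -/
def gammaM (n : ℕ) (α : ℂ) : ℂ :=
  (sigmaS (n - 1) : ℝ) * Complex.Gamma ((1 - α) / 2) /
    (2 * (Real.pi : ℂ) ^ (((n : ℂ) - 1) / 2) * Complex.Gamma (α / 2))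

/-- The generalized cosine transform `(M^α f)(u) = γ_n(α) ∫_{S^{n-1}} f(θ)|θ·u|^{α-1} dθ`
(concrete integral, absolutely convergent for `Re α > 0`); `dθ` is the normalized
rotation-invariant measure on `S^{n-1}`. -/
def cosT (n : ℕ) (α : ℂ) (f : Sph n → ℂ) (u : Sph n) : ℂ :=
  gammaM n α *
    ⨍ θ : Sph n, f θ * ((|⟪(θ : Euc n), (u : Euc n)⟫| : ℝ) : ℂ) ^ (α - 1) ∂(sphMeasure n)

/-- An analytic family realizing the generalized cosine transforms `M^α`
(including the analytic continuation to all `α ∉ {1,3,5,…}`):  the family is linear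
in `f`, maps smooth functions to smooth even functions, is given by the concrete
integral `cosT` whenever `Re α > 0`, and for each smooth `f` and each point `u` it
is analytic in `α` on `ℂ ∖ {1,3,5,…}`.  These properties determine the operators
`M^α` uniquely on smooth functions. -/
structure CosineFamily (n : ℕ) where
  M : ℂ → (Sph n → ℂ) → Sph n → ℂ
  linear : ∀ α, IsLinearMap ℂ (M α)
  smooth : ∀ {α : ℂ}, ¬ IsPosOdd α → ∀ {f : Sph n → ℂ}, SmoothSph f → SmoothSph (M α f)
  even : ∀ {α : ℂ}, ¬ IsPosOdd α → ∀ {f : Sph n → ℂ}, SmoothSph f → EvenSph (M α f)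
  formula : ∀ {α : ℂ}, 0 < α.re → ¬ IsPosOdd α → ∀ {f : Sph n → ℂ}, SmoothSph f →
    ∀ u, M α f u = cosT n α f u
  analytic : ∀ {f : Sph n → ℂ}, SmoothSph f → ∀ u,
    DifferentiableOn ℂ (fun α => M α f u) {α | ¬ IsPosOdd α}

/-- The Fourier–Laplace multiplier of `M^α`:
`m_{j,α} = (-1)^{j/2} Γ(j/2 + (1-α)/2) / Γ(j/2 + (n-1+α)/2)` (for even `j`). -/
def multM (n : ℕ) (j : ℕ) (α : ℂ) : ℂ :=
  (-1) ^ (j / 2) * Complex.Gamma ((j : ℂ) / 2 + (1 - α) / 2) /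
    Complex.Gamma ((j : ℂ) / 2 + ((n : ℂ) - 1 + α) / 2)

/-!
For real `a > 0`, `a ∉ {1, 3, 5, …}`, the integral defining `M^a` sends the zonal power
`⟨·, w⟩^{2k}` to a combination of the zonal powers `⟨·, w⟩^{2l}` with `l ≤ k`: multiplying by
`exp (-‖x‖²)` and using polar coordinates turns the spherical integral into a Gaussian integral over
`ℝ^n`, which factors into one-dimensional ones in an orthonormal basis adapted to `u` and `w`, and a
finite-difference formula for quotients of Gamma functions sums the result. By analytic continuation
the formula holds for all `α ∉ {1, 3, 5, …}`, and for `α + β = 2 - n` the triangular matrices of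
`M^α` and `M^β` are inverse to each other by binomial inversion.

`∫ (M^α f) g = ∫ f (M^α g)` is Fubini's theorem for `1 < α < 3`, and continues analytically once
`M^α f` is bounded locally uniformly in `α`. Pointwise analyticity does not give this bound; but
applying `M^α` to `ℓ¹`-superpositions of rotates of `f` gives linear functionals on a Banach space
that are holomorphic in `α` and continuous for `1 < α < 3`, for which the closed graph theorem and
the identity theorem propagate boundedness through the domain. Hence
`∫ (M^α M^β f) s = ∫ f (M^β M^α s) = ∫ f s` for every zonal power `s`, and these integrals determine
an even continuous function because the powers of `1 + ⟨·, w⟩` concentrate at `w`.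
-/

open Filter Topology fwdDiff

section HolomorphicFamilies

variable {F : Type*} [NormedAddCommGroup F] [NormedSpace ℂ F]

lemma aestronglyMeasurable_deriv_of_eventually {Ω : Type*} [MeasurableSpace Ω] {μ : Measure Ω}
    {G : ℂ → Ω → F} {z : ℂ} (hmeas : ∀ᶠ w in 𝓝 z, AEStronglyMeasurable (G w) μ)
    (hdiff : ∀ ω, DifferentiableAt ℂ (G · ω) z) :
    AEStronglyMeasurable (fun ω => deriv (G · ω) z) μ := by
  classical
  refine aestronglyMeasurable_of_tendsto_ae (𝓝[≠] z)
    (f := fun w ω => if AEStronglyMeasurable (G w) μ then slope (G · ω) z w else 0) ?_ ?_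
  · intro w
    split_ifs with hw
    · simp only [slope_def_module]
      exact (hw.sub hmeas.self_of_nhds).const_smul _
    · exact aestronglyMeasurable_const
  · refine .of_forall fun ω => (hdiff ω).hasDerivAt.tendsto_slope.congr' ?_
    filter_upwards [nhdsWithin_le_nhds hmeas] with w hw
    rw [if_pos hw]

theorem differentiableOn_integral_of_locally_bounded {Ω : Type*} [MeasurableSpace Ω] {μ : Measure Ω}
    [IsFiniteMeasure μ] {G : ℂ → Ω → F} {U : Set ℂ} (hU : IsOpen U)
    (hmeas : ∀ z ∈ U, AEStronglyMeasurable (G z) μ)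
    (hdiff : ∀ ω, DifferentiableOn ℂ (G · ω) U)
    (hbound : ∀ z ∈ U, ∃ C, ∀ᶠ w in 𝓝 z, ∀ ω, ‖G w ω‖ ≤ C) :
    DifferentiableOn ℂ (fun z => ∫ ω, G z ω ∂μ) U := by
  intro z hz
  obtain ⟨C, hC⟩ := hbound z hz
  obtain ⟨ε, hε, hεz⟩ := nhds_basis_ball.mem_iff.1 ((hU.eventually_mem hz).and hC)
  have hsub {w : ℂ} (hw : w ∈ ball z (ε / 2)) : closedBall w (ε / 3) ⊆ ball z ε :=
    closedBall_subset_ball' (by rw [mem_ball] at hw; linarith)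
  have hderiv {w : ℂ} (hw : w ∈ ball z ε) (ω : Ω) : DifferentiableAt ℂ (G · ω) w :=
    (hdiff ω).differentiableAt (hU.mem_nhds (hεz hw).1)
  have hmeas' : ∀ᶠ w in 𝓝 z, AEStronglyMeasurable (G w) μ :=
    (hU.eventually_mem hz).mono hmeas
  refine (hasDerivAt_integral_of_dominated_loc_of_deriv_le (F' := fun w ω => deriv (G · ω) w)
    (bound := fun _ => C / (ε / 3)) (ball_mem_nhds z (half_pos hε)) hmeas'
    (.of_bound (hmeas z hz) C (.of_forall hC.self_of_nhds))
    (aestronglyMeasurable_deriv_of_eventually hmeas' (hderiv (mem_ball_self hε)))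
    (.of_forall fun ω w hw => ?_) (integrable_const _)
    (.of_forall fun ω w hw => (hderiv (ball_subset_ball (half_le_self hε.le) hw) ω).hasDerivAt)
    ).2.differentiableAt.differentiableWithinAt
  refine Complex.norm_deriv_le_of_forall_mem_sphere_norm_le (by positivity)
    (DifferentiableOn.diffContOnCl fun v hv => ?_)
    fun v hv => (hεz (hsub hw (sphere_subset_closedBall hv))).2 ω
  exact (hderiv (hsub hw (closure_ball_subset_closedBall hv)) ω).differentiableWithinAt

variable [CompleteSpace F] {E : Type*} [NormedAddCommGroup E] [NormedSpace ℂ E] [CompleteSpace E]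

lemma eqOn_closedBall_of_tendstoUniformlyOn_of_frequently_eq {u : ℕ → ℂ → F}
    {f g : ℂ → F} {c z₀ : ℂ} {r : ℝ} (hz₀ : z₀ ∈ ball c r)
    (hu : ∀ n, DiffContOnCl ℂ (u n) (ball c r))
    (huf : TendstoUniformlyOn u f atTop (closedBall c r)) (hg : DiffContOnCl ℂ g (ball c r))
    (hfg : ∃ᶠ z in 𝓝[≠] z₀, f z = g z) : Set.EqOn f g (closedBall c r) := by
  have hr : r ≠ 0 := (pos_of_mem_ball hz₀).ne'
  have hf : DifferentiableOn ℂ f (ball c r) :=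
    (huf.mono ball_subset_closedBall).tendstoLocallyUniformlyOn.differentiableOn
      (.of_forall fun n => (hu n).differentiableOn) isOpen_ball
  have hball : Set.EqOn f g (ball c r) :=
    (hf.analyticOnNhd isOpen_ball).eqOn_of_preconnected_of_frequently_eq
      (hg.differentiableOn.analyticOnNhd isOpen_ball) (convex_ball c r).isPreconnected hz₀ hfg
  refine hball.of_subset_closure ?_ ?_ ball_subset_closedBall (closure_ball c hr).ge
  · exact huf.continuousOn (.of_forall fun n => (hu n).continuousOn_ball)
  · exact hg.continuousOn_ball

theorem exists_bound_on_closedBall_of_frequently_continuous {T : ℂ → E →ₗ[ℂ] F} {c z₀ : ℂ} {r : ℝ}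
    (hz₀ : z₀ ∈ ball c r) (hT : ∀ x, DiffContOnCl ℂ (T · x) (ball c r))
    (hcont : ∃ᶠ z in 𝓝[≠] z₀, Continuous (T z)) :
    ∃ C, ∀ z ∈ closedBall c r, ∀ x, ‖T z x‖ ≤ C * ‖x‖ := by
  have : CompactSpace (closedBall c r) := isCompact_iff_compactSpace.1 (isCompact_closedBall c r)
  let S : E →ₗ[ℂ] C(closedBall c r, F) :=
    { toFun x := ⟨fun z => T z x, ((hT x).continuousOn_ball).domRestrict⟩
      map_add' x y := ContinuousMap.ext fun z => (T z).map_add x y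
      map_smul' a x := ContinuousMap.ext fun z => (T z).map_smul a x }
  have hS : Continuous S := by
    refine S.continuous_of_seq_closed_graph fun u x y hu hSu => ?_
    let f : ℂ → F := Function.extend Subtype.val y 0
    have hfy (z : closedBall c r) : f z = y z := Subtype.val_injective.extend_apply _ _ z
    have huf : TendstoUniformlyOn (fun n z => T z (u n)) f atTop (closedBall c r) := by
      rw [tendstoUniformlyOn_iff_tendstoUniformly_comp_coe]
      rw [show f ∘ Subtype.val = y from funext hfy]
      exact ContinuousMap.tendsto_iff_tendstoUniformly.1 hSu
    have hfg : ∃ᶠ z in 𝓝[≠] z₀, f z = T z x := by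
      have hmem : ∀ᶠ z in 𝓝[≠] z₀, z ∈ closedBall c r :=
        nhdsWithin_le_nhds (mem_of_superset (isOpen_ball.mem_nhds hz₀) ball_subset_closedBall)
      refine (hcont.and_eventually hmem).mono fun z ⟨hz, hzr⟩ => ?_
      exact tendsto_nhds_unique (huf.tendsto_at hzr) ((hz.tendsto x).comp hu)
    ext z
    rw [← hfy]
    exact eqOn_closedBall_of_tendstoUniformlyOn_of_frequently_eq hz₀ (fun n => hT (u n)) huf
      (hT x) hfg z.2
  let S' : E →L[ℂ] C(closedBall c r, F) := ⟨S, hS⟩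
  exact ⟨‖S'‖, fun z hz x => ((S x).norm_coe_le_norm ⟨z, hz⟩).trans (S'.le_opNorm x)⟩

theorem eventually_bounded_of_frequently_continuous {T : ℂ → E →ₗ[ℂ] F} {U : Set ℂ} {z₀ z : ℂ}
    (hU : IsOpen U) (hUc : IsPreconnected U) (hz₀ : z₀ ∈ U)
    (hT : ∀ x, DifferentiableOn ℂ (T · x) U) (hcont : ∃ᶠ w in 𝓝[≠] z₀, Continuous (T w))
    (hz : z ∈ U) : ∃ C, ∀ᶠ w in 𝓝 z, ∀ x, ‖T w x‖ ≤ C * ‖x‖ := by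
  let V : Set ℂ := {z | ∃ C, ∀ᶠ w in 𝓝 z, ∀ x, ‖T w x‖ ≤ C * ‖x‖}
  have hVo : IsOpen V := isOpen_iff_eventually.2 fun z ⟨C, hC⟩ =>
    hC.eventually_nhds.mono fun w hw => ⟨C, hw⟩
  have hball {z z₁ : ℂ} {r : ℝ} (hr : closedBall z r ⊆ U) (hz₁ : z₁ ∈ ball z r)
      (h : ∃ᶠ w in 𝓝[≠] z₁, Continuous (T w)) : z ∈ V := by
    obtain ⟨C, hC⟩ := exists_bound_on_closedBall_of_frequently_continuous hz₁
      (fun x => ((hT x).mono (closure_ball_subset_closedBall.trans hr)).diffContOnCl) h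
    exact ⟨C, mem_of_superset (closedBall_mem_nhds z (pos_of_mem_ball hz₁)) hC⟩
  have hz₀V : z₀ ∈ V := by
    obtain ⟨r, hr, hrU⟩ := nhds_basis_closedBall.mem_iff.1 (hU.mem_nhds hz₀)
    exact hball hrU (mem_ball_self hr) hcont
  refine hUc.subset_of_closure_inter_subset hVo ⟨z₀, hz₀, hz₀V⟩ ?_ hz
  rintro z ⟨hzV, hzU⟩
  obtain ⟨r, hr, hrU⟩ := nhds_basis_closedBall.mem_iff.1 (hU.mem_nhds hzU)
  obtain ⟨z₁, hz₁V, hz₁⟩ := mem_closure_iff.1 hzV _ isOpen_ball (mem_ball_self hr) |>.imp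
    fun _ h => h.symm
  obtain ⟨C, hC⟩ := hz₁V
  refine hball hrU hz₁ (Eventually.frequently ?_)
  filter_upwards [nhdsWithin_le_nhds hC] with w hw
  exact AddMonoidHomClass.continuous_of_bound (T w) C hw

end HolomorphicFamilies

section FiniteDifferences

theorem sum_choose_mul_pow_mul_eq_sum_fwdDiff_iterate {R : Type*} [CommRing R] (r : ℕ → R) (s : R)
    (k : ℕ) :
    ∑ i ∈ Finset.range (k + 1), k.choose i * s ^ i * (1 - s) ^ (k - i) * r i =
      ∑ l ∈ Finset.range (k + 1), k.choose l * s ^ l * (Δ_[1])^[l] r 0 := by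
  let E : Module.End R (ℕ → R) := LinearMap.funLeft R R (· + 1)
  have hE (i : ℕ) (r : ℕ → R) (m : ℕ) : (E ^ i) r m = r (m + i) := by
    induction i generalizing r with
    | zero => simp
    | succ i ih => rw [pow_succ, Module.End.mul_apply, ih]; rfl
  have hΔ (l : ℕ) : ((E - 1) ^ l) r = (Δ_[1])^[l] r := Module.End.pow_apply _ _ _
  have hs : s • E + (1 - s) • 1 = s • (E - 1) + 1 := by module
  have hcomm : Commute (s • E) ((1 - s) • (1 : Module.End R (ℕ → R))) :=
    (Commute.one_right _).smul_right _
  have hpow := congrArg (fun T : Module.End R (ℕ → R) => T r 0) (congrArg (· ^ k) hs)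
  simp only [hcomm.add_pow, (Commute.one_right (s • (E - 1))).add_pow, smul_pow, one_pow, mul_one,
    LinearMap.sum_apply, Finset.sum_apply, smul_mul_smul_comm] at hpow
  simpa [← nsmul_eq_mul', hE, hΔ, ← Nat.cast_smul_eq_nsmul R, mul_assoc] using hpow

theorem fwdDiff_iterate_Gamma_div_Gamma {x y : ℝ} (hx : 0 < x) (hy : 0 < y)
    (hxy : ∀ j : ℕ, x - y ≠ -j) (l i : ℕ) :
    (Δ_[1])^[l] (fun i : ℕ => Real.Gamma (y + i) / Real.Gamma (x + i)) i =
      (-1) ^ l * (Real.Gamma (x - y + l) / Real.Gamma (x - y)) *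
        (Real.Gamma (y + i) / Real.Gamma (x + i + l)) := by
  induction l generalizing i with
  | zero => simp [Real.Gamma_ne_zero hxy]
  | succ l ih =>
    have hxi : x + i + l ≠ 0 := by positivity
    have hΓ : Real.Gamma (x + i + l) ≠ 0 := (Real.Gamma_pos_of_pos (by positivity)).ne'
    have hΓ' : Real.Gamma (x - y) ≠ 0 := Real.Gamma_ne_zero hxy
    have hne : x - y + l ≠ 0 := fun h => hxy l (by linarith)
    rw [Function.iterate_succ_apply', fwdDiff, ih, ih]
    push_cast
    rw [← add_assoc y, Real.Gamma_add_one (show y + i ≠ 0 by positivity), ← add_assoc x,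
      add_right_comm (x + i) 1, ← add_assoc (x + i), Real.Gamma_add_one hxi,
      ← add_assoc (x - y), Real.Gamma_add_one hne]
    field_simp
    ring

lemma factorial_two_mul_mul_sqrt_pi (k : ℕ) :
    ((2 * k).factorial : ℝ) * √Real.pi = 4 ^ k * k.factorial * Real.Gamma (1 / 2 + k) := by
  have h := Real.Gamma_mul_Gamma_add_half (k + 1 / 2)
  have h4 : (2 : ℝ) ^ (1 - 2 * ((k : ℝ) + 1 / 2)) = (4 ^ k)⁻¹ := by
    rw [show 1 - 2 * ((k : ℝ) + 1 / 2) = -((2 * k : ℕ) : ℝ) by push_cast; ring,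
      Real.rpow_neg zero_le_two, Real.rpow_natCast, pow_mul]
    norm_num
  rw [show (k : ℝ) + 1 / 2 + 1 / 2 = k + 1 by ring, Real.Gamma_nat_eq_factorial, h4,
    show 2 * ((k : ℝ) + 1 / 2) = (2 * k : ℕ) + 1 by push_cast; ring,
    Real.Gamma_nat_eq_factorial] at h
  calc ((2 * k).factorial : ℝ) * √Real.pi
      = 4 ^ k * ((2 * k).factorial * (4 ^ k)⁻¹ * √Real.pi) := by field_simp
    _ = 4 ^ k * k.factorial * Real.Gamma (1 / 2 + k) := by rw [← h, add_comm (1 / 2 : ℝ)]; ring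

lemma choose_two_mul_two_mul {k i : ℕ} (h : i ≤ k) :
    ((2 * k).choose (2 * i) : ℝ) = k.choose i * (Real.Gamma (1 / 2 + k) * √Real.pi /
      (Real.Gamma (1 / 2 + i) * Real.Gamma (1 / 2 + (k - i : ℕ)))) := by
  have hfact (m : ℕ) : ((2 * m).factorial : ℝ) =
      4 ^ m * m.factorial * Real.Gamma (1 / 2 + m) / √Real.pi := by
    rw [← factorial_two_mul_mul_sqrt_pi, mul_div_cancel_right₀ _ (by positivity)]
  have hΓ (m : ℕ) : Real.Gamma (1 / 2 + m) ≠ 0 := (Real.Gamma_pos_of_pos (by positivity)).ne'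
  have h4 : (4 : ℝ) ^ k = 4 ^ i * 4 ^ (k - i) := by rw [← pow_add, Nat.add_sub_cancel' h]
  have := hΓ k
  have := hΓ i
  have := hΓ (k - i)
  rw [Nat.cast_choose ℝ (by lia), Nat.cast_choose ℝ h, ← Nat.mul_sub, hfact, hfact, hfact, h4]
  field_simp

theorem sum_neg_one_pow_mul_choose_mul_choose {R : Type*} [CommRing R] (k m : ℕ) :
    ∑ l ∈ Finset.range (k + 1), (-1 : R) ^ l * k.choose l * ((-1) ^ m * l.choose m) =
      if k = m then 1 else 0 := by
  have h := fwdDiff_iter_choose_zero m k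
  rw [fwdDiff_iter_eq_sum_shift] at h
  have hsign : ∀ l ∈ Finset.range (k + 1),
      (-1 : R) ^ l * k.choose l * ((-1) ^ m * l.choose m) =
        (-1) ^ (k + m) * ((-1) ^ (k - l) * k.choose l * l.choose m) := fun l hl => by
    have hl : l ≤ k := Finset.mem_range_succ_iff.1 hl
    have hsq : (-1 : R) ^ (k - l) * (-1) ^ (k - l) = 1 := by simp [← mul_pow]
    rw [show k + m = l + (k - l) + m by lia, pow_add, pow_add]
    linear_combination (-(-1) ^ l * k.choose l * (-1) ^ m * l.choose m : R) * hsq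
  rw [Finset.sum_congr rfl hsign, ← Finset.mul_sum]
  have hR := congrArg (Int.cast : ℤ → R) h
  push_cast [smul_eq_mul, zero_add, mul_one] at hR
  rw [hR]
  split_ifs with hkm
  · simp [hkm, ← two_mul]
  · simp

end FiniteDifferences

section OneDim

lemma abs_rpow_mul_pow_two_mul {t : ℝ} (ht : t ≠ 0) (q : ℝ) (i : ℕ) :
    |t| ^ q * t ^ (2 * i) = |t| ^ (q + (2 * i : ℕ)) := by
  rw [Real.rpow_add (abs_pos.2 ht), Real.rpow_natCast, (even_two_mul i).pow_abs]

lemma integral_abs_rpow_mul_exp_neg_sq {q : ℝ} (hq : -1 < q) :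
    ∫ t : ℝ, |t| ^ q * Real.exp (-t ^ 2) = Real.Gamma ((q + 1) / 2) := by
  have h := integral_comp_abs (f := fun t => t ^ q * Real.exp (-t ^ 2))
  have hΓ := _root_.integral_rpow_mul_exp_neg_rpow two_pos hq
  simp only [sq_abs] at h
  simp only [Real.rpow_two] at hΓ
  rw [h, hΓ]
  ring

lemma integral_abs_rpow_mul_even_pow_mul_exp_neg_sq {q : ℝ} (hq : -1 < q) (i : ℕ) :
    ∫ t : ℝ, |t| ^ q * t ^ (2 * i) * Real.exp (-t ^ 2) = Real.Gamma ((q + 1) / 2 + i) := by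
  have hae : ∀ᵐ t : ℝ, |t| ^ q * t ^ (2 * i) * Real.exp (-t ^ 2) =
      |t| ^ (q + (2 * i : ℕ)) * Real.exp (-t ^ 2) :=
    (Measure.ae_ne volume (0 : ℝ)).mono fun t ht => by rw [abs_rpow_mul_pow_two_mul ht]
  rw [integral_congr_ae hae,
    integral_abs_rpow_mul_exp_neg_sq (lt_add_of_lt_of_nonneg hq (by positivity))]
  push_cast
  ring_nf

lemma integral_abs_rpow_mul_odd_pow_mul_exp_neg_sq (q : ℝ) {j : ℕ} (hj : Odd j) :
    ∫ t : ℝ, |t| ^ q * t ^ j * Real.exp (-t ^ 2) = 0 := by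
  have h := integral_neg_eq_self (fun t : ℝ => |t| ^ q * t ^ j * Real.exp (-t ^ 2)) volume
  simp only [abs_neg, neg_sq, hj.neg_pow, mul_neg, neg_mul, integral_neg] at h
  linarith

lemma integrable_abs_rpow_mul_pow_mul_exp_neg_sq {q : ℝ} (hq : -1 < q) (j : ℕ) :
    Integrable fun t : ℝ => |t| ^ q * t ^ j * Real.exp (-t ^ 2) := by
  have hq' : -1 < q + j := lt_add_of_lt_of_nonneg hq (by positivity)
  have h : Integrable fun t : ℝ => |t| ^ (q + j) * Real.exp (-t ^ 2) := by
    refine .of_integral_ne_zero ?_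
    rw [integral_abs_rpow_mul_exp_neg_sq hq']
    exact (Real.Gamma_pos_of_pos (by linarith)).ne'
  refine h.mono (by fun_prop) ?_
  filter_upwards [Measure.ae_ne volume (0 : ℝ)] with t ht
  simp [Real.rpow_add (abs_pos.2 ht)]

end OneDim

lemma sum_range_two_mul_add_one_eq_sum_even {M : Type*} [AddCommMonoid M] {h : ℕ → M}
    (hodd : ∀ j, Odd j → h j = 0) (k : ℕ) :
    ∑ j ∈ Finset.range (2 * k + 1), h j = ∑ i ∈ Finset.range (k + 1), h (2 * i) := by
  induction k with
  | zero => simp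
  | succ k ih =>
    rw [Finset.sum_range_succ _ (k + 1), ← ih, show 2 * (k + 1) = 2 * k + 1 + 1 by ring,
      Finset.sum_range_succ, Finset.sum_range_succ _ (2 * k + 1),
      hodd _ (odd_two_mul_add_one k), add_zero]

section Gaussian

variable {E : Type*} [NormedAddCommGroup E] [InnerProductSpace ℝ E]

section Product

variable {ι : Type*} [Fintype ι]

lemma prod_inner_mul_exp_neg_norm_sq_repr_symm (b : OrthonormalBasis ι ℝ E) (g : ι → ℝ → ℝ)
    (y : ι → ℝ) :
    (∏ i, g i ⟪b i, b.repr.symm (WithLp.toLp 2 y)⟫) *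
        Real.exp (-‖b.repr.symm (WithLp.toLp 2 y)‖ ^ 2) =
      ∏ i, g i (y i) * Real.exp (-y i ^ 2) := by
  have hnorm : ‖b.repr.symm (WithLp.toLp 2 y)‖ ^ 2 = ∑ i, y i ^ 2 := by
    rw [LinearIsometryEquiv.norm_map, EuclideanSpace.norm_sq_eq]
    simp
  rw [hnorm, ← Finset.sum_neg_distrib, Real.exp_sum, Finset.prod_mul_distrib]
  simp [← b.repr_apply_apply]

variable [MeasurableSpace E] [BorelSpace E]

lemma measurableEmbedding_repr_symm_toLp (b : OrthonormalBasis ι ℝ E) :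
    MeasurableEmbedding (fun y : ι → ℝ => b.repr.symm (WithLp.toLp 2 y)) :=
  b.repr.symm.toHomeomorph.measurableEmbedding.comp (MeasurableEquiv.toLp 2 _).measurableEmbedding

variable [FiniteDimensional ℝ E]

lemma measurePreserving_repr_symm_toLp (b : OrthonormalBasis ι ℝ E) :
    MeasurePreserving (fun y : ι → ℝ => b.repr.symm (WithLp.toLp 2 y)) :=
  b.measurePreserving_repr_symm.comp (PiLp.volume_preserving_toLp ι)

theorem integral_prod_inner_mul_exp_neg_norm_sq (b : OrthonormalBasis ι ℝ E) (g : ι → ℝ → ℝ) :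
    ∫ x, (∏ i, g i ⟪b i, x⟫) * Real.exp (-‖x‖ ^ 2) = ∏ i, ∫ t, g i t * Real.exp (-t ^ 2) := by
  rw [← (measurePreserving_repr_symm_toLp b).integral_comp (measurableEmbedding_repr_symm_toLp b)]
  simp_rw [prod_inner_mul_exp_neg_norm_sq_repr_symm]
  exact integral_fintype_prod_volume_eq_prod fun i t => g i t * Real.exp (-t ^ 2)

theorem integrable_prod_inner_mul_exp_neg_norm_sq (b : OrthonormalBasis ι ℝ E) {g : ι → ℝ → ℝ}
    (hg : ∀ i, Integrable fun t => g i t * Real.exp (-t ^ 2)) :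
    Integrable fun x => (∏ i, g i ⟪b i, x⟫) * Real.exp (-‖x‖ ^ 2) := by
  rw [← (measurePreserving_repr_symm_toLp b).integrable_comp_emb
    (measurableEmbedding_repr_symm_toLp b)]
  simp_rw [Function.comp_def, prod_inner_mul_exp_neg_norm_sq_repr_symm]
  exact Integrable.fintype_prod hg

end Product

variable [FiniteDimensional ℝ E]

open InnerProductSpace in
lemma exists_orthonormalBasis_adapted {m : ℕ} (hE : Module.finrank ℝ E = m + 2) {u w : E}
    (hu : ‖u‖ = 1) (hw : ‖w‖ = 1) :
    ∃ (b : OrthonormalBasis (Fin (m + 2)) ℝ E) (d : ℝ), b 0 = u ∧ d ^ 2 = 1 - ⟪u, w⟫ ^ 2 ∧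
      ∀ x, ⟪w, x⟫ = ⟪u, w⟫ * ⟪u, x⟫ + d * ⟪b 1, x⟫ := by
  let f : Fin (m + 2) → E := Fin.cons u (Fin.cons w 0)
  let b := gramSchmidtOrthonormalBasis (hE.trans (Fintype.card_fin _).symm) f
  have hf0 : gramSchmidtNormed ℝ f 0 = u := by
    have : gramSchmidt ℝ f 0 = u := gramSchmidt_bot ℝ f
    simp [gramSchmidtNormed, this, hu]
  have hb0 : b 0 = u :=
    (gramSchmidtOrthonormalBasis_apply _ (by rw [hf0, ← norm_ne_zero_iff, hu]; simp)).trans hf0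
  have hbw (j : Fin m) : ⟪b j.succ.succ, w⟫ = 0 :=
    gramSchmidtOrthonormalBasis_inv_triangular _ f (i := 1) (by simp [Fin.lt_def])
  have hx (x : E) : ⟪w, x⟫ = ⟪u, w⟫ * ⟪u, x⟫ + ⟪b 1, w⟫ * ⟪b 1, x⟫ := by
    rw [← b.sum_inner_mul_inner, Fin.sum_univ_succ, Fin.sum_univ_succ]
    simp [real_inner_comm _ w, hbw, hb0]
  refine ⟨b, ⟪b 1, w⟫, hb0, ?_, hx⟩
  have hww := hx w
  rw [real_inner_self_eq_norm_sq, hw] at hww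
  linarith

variable [MeasurableSpace E] [BorelSpace E]

theorem integral_mul_inner_mul_inner_mul_exp_neg_norm_sq {m : ℕ}
    (b : OrthonormalBasis (Fin (m + 2)) ℝ E) (g₀ g₁ : ℝ → ℝ) :
    ∫ x, g₀ ⟪b 0, x⟫ * g₁ ⟪b 1, x⟫ * Real.exp (-‖x‖ ^ 2) =
      (∫ t, g₀ t * Real.exp (-t ^ 2)) * (∫ t, g₁ t * Real.exp (-t ^ 2)) * √Real.pi ^ m := by
  have hpi : ∫ t : ℝ, Real.exp (-t ^ 2) = √Real.pi := by simpa using integral_gaussian 1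
  have := integral_prod_inner_mul_exp_neg_norm_sq b (Fin.cons g₀ (Fin.cons g₁ fun _ _ => 1))
  simpa [Fin.prod_univ_succ, hpi, mul_assoc] using this

theorem integrable_mul_inner_mul_inner_mul_exp_neg_norm_sq {m : ℕ}
    (b : OrthonormalBasis (Fin (m + 2)) ℝ E) {g₀ g₁ : ℝ → ℝ}
    (h₀ : Integrable fun t => g₀ t * Real.exp (-t ^ 2))
    (h₁ : Integrable fun t => g₁ t * Real.exp (-t ^ 2)) :
    Integrable fun x => g₀ ⟪b 0, x⟫ * g₁ ⟪b 1, x⟫ * Real.exp (-‖x‖ ^ 2) := by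
  have hexp : Integrable fun t : ℝ => 1 * Real.exp (-t ^ 2) := by
    simpa using integrable_exp_neg_mul_sq one_pos
  have := integrable_prod_inner_mul_exp_neg_norm_sq b
    (g := Fin.cons g₀ (Fin.cons g₁ fun _ _ => 1))
    (Fin.cases h₀ (Fin.cases h₁ fun _ => hexp))
  simpa [Fin.prod_univ_succ, mul_assoc] using this

theorem integral_abs_inner_rpow_mul_inner_pow_mul_exp_neg_norm_sq {m : ℕ}
    (hE : Module.finrank ℝ E = m + 2) {u w : E} (hu : ‖u‖ = 1) (hw : ‖w‖ = 1) {q : ℝ}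
    (hq : -1 < q) (k : ℕ) :
    ∫ x, |⟪u, x⟫| ^ q * ⟪w, x⟫ ^ (2 * k) * Real.exp (-‖x‖ ^ 2) =
      √Real.pi ^ m * ∑ i ∈ Finset.range (k + 1), (2 * k).choose (2 * i) * (⟪u, w⟫ ^ 2) ^ i *
        (1 - ⟪u, w⟫ ^ 2) ^ (k - i) *
          (Real.Gamma ((q + 1) / 2 + i) * Real.Gamma (1 / 2 + (k - i : ℕ))) := by
  obtain ⟨b, d, rfl, hd, hw⟩ := exists_orthonormalBasis_adapted hE hu hw
  set c := ⟪b 0, w⟫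
  let coef (j : ℕ) : ℝ := (2 * k).choose j * c ^ j * d ^ (2 * k - j)
  have hint (j : ℕ) : Integrable fun t : ℝ => t ^ j * Real.exp (-t ^ 2) := by
    simpa using integrable_abs_rpow_mul_pow_mul_exp_neg_sq (q := 0) (by simp) j
  have hexpand (x : E) : |⟪b 0, x⟫| ^ q * ⟪w, x⟫ ^ (2 * k) * Real.exp (-‖x‖ ^ 2) =
      ∑ j ∈ Finset.range (2 * k + 1), coef j *
        (|⟪b 0, x⟫| ^ q * ⟪b 0, x⟫ ^ j * ⟪b 1, x⟫ ^ (2 * k - j) * Real.exp (-‖x‖ ^ 2)) := by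
    rw [hw, add_pow, Finset.mul_sum, Finset.sum_mul]
    exact Finset.sum_congr rfl fun j _ => by ring
  simp_rw [hexpand]
  rw [integral_finsetSum _ fun j _ => (integrable_mul_inner_mul_inner_mul_exp_neg_norm_sq b
    (g₀ := fun t => |t| ^ q * t ^ j) (g₁ := fun t => t ^ (2 * k - j))
    (integrable_abs_rpow_mul_pow_mul_exp_neg_sq hq j) (hint _)).const_mul _]
  have hterm (j : ℕ) :=
    integral_mul_inner_mul_inner_mul_exp_neg_norm_sq b (fun t => |t| ^ q * t ^ j)
      fun t => t ^ (2 * k - j)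
  simp only [integral_const_mul, hterm]
  rw [sum_range_two_mul_add_one_eq_sum_even fun j hj => by
    rw [integral_abs_rpow_mul_odd_pow_mul_exp_neg_sq q hj]; simp, Finset.mul_sum]
  refine Finset.sum_congr rfl fun i _ => ?_
  have heven : ∫ t : ℝ, t ^ (2 * (k - i)) * Real.exp (-t ^ 2) =
      Real.Gamma (1 / 2 + (k - i : ℕ)) := by
    simpa using integral_abs_rpow_mul_even_pow_mul_exp_neg_sq (q := 0) (by simp) (k - i)
  simp only [coef, ← Nat.mul_sub, heven, integral_abs_rpow_mul_even_pow_mul_exp_neg_sq hq]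
  rw [pow_mul c, pow_mul d, hd]
  ring

theorem integral_abs_inner_rpow_mul_inner_pow_mul_exp_neg_norm_sq_eq_sum_neg_one_pow {m : ℕ}
    (hE : Module.finrank ℝ E = m + 2) {u w : E} (hu : ‖u‖ = 1) (hw : ‖w‖ = 1) {a : ℝ}
    (ha : 0 < a) (hpole : ∀ j : ℕ, (1 - a) / 2 ≠ -j) (k : ℕ) :
    ∫ x, |⟪u, x⟫| ^ (a - 1) * ⟪w, x⟫ ^ (2 * k) * Real.exp (-‖x‖ ^ 2) =
      √Real.pi ^ (m + 1) * Real.Gamma (a / 2) / Real.Gamma ((1 - a) / 2) *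
        Real.Gamma (1 / 2 + k) * ∑ l ∈ Finset.range (k + 1), k.choose l * (-1) ^ l *
          (Real.Gamma ((1 - a) / 2 + l) / Real.Gamma (1 / 2 + l)) * ⟪u, w⟫ ^ (2 * l) := by
  have hq : -1 < a - 1 := by linarith
  have hpole' : ∀ j : ℕ, (1 : ℝ) / 2 - a / 2 ≠ -j := by simpa only [← sub_div] using hpole
  rw [integral_abs_inner_rpow_mul_inner_pow_mul_exp_neg_norm_sq hE hu hw hq]
  have hbern := sum_choose_mul_pow_mul_eq_sum_fwdDiff_iterate
    (fun i : ℕ => Real.Gamma (a / 2 + i) / Real.Gamma (1 / 2 + i)) (⟪u, w⟫ ^ 2) k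
  simp only [fwdDiff_iterate_Gamma_div_Gamma one_half_pos (half_pos ha) hpole',
    ← sub_div, Nat.cast_zero, add_zero] at hbern
  have hsum : ∀ i ∈ Finset.range (k + 1), (2 * k).choose (2 * i) * (⟪u, w⟫ ^ 2) ^ i *
        (1 - ⟪u, w⟫ ^ 2) ^ (k - i) *
          (Real.Gamma ((a - 1 + 1) / 2 + i) * Real.Gamma (1 / 2 + (k - i : ℕ))) =
      √Real.pi * Real.Gamma (1 / 2 + k) *
        (k.choose i * (⟪u, w⟫ ^ 2) ^ i * (1 - ⟪u, w⟫ ^ 2) ^ (k - i) *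
          (Real.Gamma (a / 2 + i) / Real.Gamma (1 / 2 + i))) := fun i hi => by
    have : Real.Gamma (1 / 2 + (k - i : ℕ)) ≠ 0 := (Real.Gamma_pos_of_pos (by positivity)).ne'
    rw [choose_two_mul_two_mul (Finset.mem_range_succ_iff.1 hi), sub_add_cancel]
    field_simp
  rw [Finset.sum_congr rfl hsum, ← Finset.mul_sum, hbern, Finset.mul_sum, Finset.mul_sum,
    Finset.mul_sum]
  refine Finset.sum_congr rfl fun l _ => ?_
  ring

end Gaussian

section Polar

lemma integral_volumeIoiPow {F : Type*} [NormedAddCommGroup F] [NormedSpace ℝ F] (k : ℕ)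
    (f : ℝ → F) :
    ∫ r : Set.Ioi (0 : ℝ), f r ∂.volumeIoiPow k = ∫ r in Set.Ioi (0 : ℝ), r ^ k • f r := by
  simp only [Measure.volumeIoiPow, ENNReal.ofReal]
  rw [integral_withDensity_eq_integral_smul (measurable_subtype_coe.pow_const _).real_toNNReal,
    integral_subtype_comap measurableSet_Ioi fun r : ℝ => Real.toNNReal (r ^ k) • f r]
  refine setIntegral_congr_fun measurableSet_Ioi fun r hr => ?_
  rw [NNReal.smul_def, Real.coe_toNNReal _ (pow_nonneg hr.out.le _)]

variable {E : Type*} [NormedAddCommGroup E] [NormedSpace ℝ E] [FiniteDimensional ℝ E]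
  [MeasurableSpace E] [BorelSpace E] (μ : Measure E) [μ.IsAddHaarMeasure]

theorem integral_mul_norm_eq_integral_toSphere_mul [Nontrivial E] {P : E → ℝ} {d : ℝ}
    (hP : ∀ r > 0, ∀ x, P (r • x) = r ^ d * P x) (g : ℝ → ℝ) :
    ∫ x, P x * g ‖x‖ ∂μ =
      (∫ θ, P θ ∂μ.toSphere) *
        ∫ r in Set.Ioi (0 : ℝ), r ^ (Module.finrank ℝ E - 1) * (r ^ d * g r) := by
  have hpolar (x : ({0}ᶜ : Set E)) : P (homeomorphUnitSphereProd E x).1 *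
      (((homeomorphUnitSphereProd E x).2 : ℝ) ^ d * g (homeomorphUnitSphereProd E x).2) =
        P x * g ‖(x : E)‖ := by
    have hx : 0 < ‖(x : E)‖ := norm_pos_iff.2 x.2
    have h := hP _ hx (homeomorphUnitSphereProd E x).1
    rw [homeomorphUnitSphereProd_apply_fst_coe, smul_inv_smul₀ hx.ne'] at h
    rw [homeomorphUnitSphereProd_apply_snd_coe, homeomorphUnitSphereProd_apply_fst_coe, h]
    ring
  calc ∫ x, P x * g ‖x‖ ∂μ
      = ∫ x : ({0}ᶜ : Set E), P x * g ‖(x : E)‖ ∂(μ.comap (↑)) := by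
        rw [integral_subtype_comap (measurableSet_singleton _).compl fun x => P x * g ‖x‖,
          restrict_compl_singleton]
    _ = ∫ p : sphere (0 : E) 1 × Set.Ioi (0 : ℝ), P p.1 * ((p.2 : ℝ) ^ d * g p.2)
          ∂μ.toSphere.prod (.volumeIoiPow (Module.finrank ℝ E - 1)) := by
        rw [← μ.measurePreserving_homeomorphUnitSphereProd.integral_comp
          (Homeomorph.measurableEmbedding _)]
        simp_rw [hpolar]
    _ = (∫ θ, P θ ∂μ.toSphere) *
          ∫ r : Set.Ioi (0 : ℝ), (r : ℝ) ^ d * g r ∂.volumeIoiPow (Module.finrank ℝ E - 1) :=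
        integral_prod_mul (fun θ : sphere (0 : E) 1 => P θ)
          fun r : Set.Ioi (0 : ℝ) => (r : ℝ) ^ d * g r
    _ = _ := by rw [integral_volumeIoiPow _ fun r => r ^ d * g r]; simp only [smul_eq_mul]

theorem integral_mul_exp_neg_norm_sq_of_homogeneous [Nontrivial E] {P : E → ℝ} {d : ℝ}
    (hP : ∀ r > 0, ∀ x, P (r • x) = r ^ d * P x) (hd : 0 < Module.finrank ℝ E + d) :
    ∫ x, P x * Real.exp (-‖x‖ ^ 2) ∂μ =
      (∫ θ, P θ ∂μ.toSphere) * (Real.Gamma ((Module.finrank ℝ E + d) / 2) / 2) := by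
  rw [integral_mul_norm_eq_integral_toSphere_mul μ hP fun r => Real.exp (-r ^ 2)]
  have hdim : 1 ≤ Module.finrank ℝ E := Module.finrank_pos
  have hΓ := _root_.integral_rpow_mul_exp_neg_rpow two_pos
    (q := Module.finrank ℝ E - 1 + d) (by linarith)
  have hr : ∀ r ∈ Set.Ioi (0 : ℝ), r ^ (Module.finrank ℝ E - 1) * (r ^ d * Real.exp (-r ^ 2)) =
      r ^ ((Module.finrank ℝ E : ℝ) - 1 + d) * Real.exp (-r ^ (2 : ℝ)) := fun r hr => by
    rw [Real.rpow_add hr, Real.rpow_two, ← Nat.cast_pred hdim, Real.rpow_natCast, mul_assoc]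
  rw [setIntegral_congr_fun measurableSet_Ioi hr, hΓ]
  ring_nf

end Polar

theorem integral_sphere_abs_inner_rpow_mul_inner_pow {E : Type*} [NormedAddCommGroup E]
    [InnerProductSpace ℝ E] [FiniteDimensional ℝ E] [MeasurableSpace E] [BorelSpace E] {m : ℕ}
    (hE : Module.finrank ℝ E = m + 2) {u w : E} (hu : ‖u‖ = 1) (hw : ‖w‖ = 1) {a : ℝ} (ha : 0 < a)
    (hpole : ∀ j : ℕ, (1 - a) / 2 ≠ -j) (k : ℕ) :
    ∫ θ : sphere (0 : E) 1, |⟪u, θ⟫| ^ (a - 1) * ⟪w, θ⟫ ^ (2 * k) ∂volume.toSphere =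
      2 * (√Real.pi ^ (m + 1) * Real.Gamma (a / 2) / Real.Gamma ((1 - a) / 2)) *
        (Real.Gamma (1 / 2 + k) / Real.Gamma ((m + 1 + a) / 2 + k)) *
        ∑ l ∈ Finset.range (k + 1), k.choose l * (-1) ^ l *
          (Real.Gamma ((1 - a) / 2 + l) / Real.Gamma (1 / 2 + l)) * ⟪u, w⟫ ^ (2 * l) := by
  have : Nontrivial E := Module.nontrivial_of_finrank_pos (R := ℝ) (by lia)
  have hhom : ∀ r > (0 : ℝ), ∀ x, |⟪u, r • x⟫| ^ (a - 1) * ⟪w, r • x⟫ ^ (2 * k) =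
      r ^ (a - 1 + (2 * k : ℕ)) * (|⟪u, x⟫| ^ (a - 1) * ⟪w, x⟫ ^ (2 * k)) := fun r hr x => by
    rw [real_inner_smul_right, real_inner_smul_right, abs_mul, abs_of_pos hr,
      Real.mul_rpow hr.le (abs_nonneg _), mul_pow, Real.rpow_add hr, Real.rpow_natCast]
    ring
  have hdeg : ((m + 2 : ℕ) + (a - 1 + (2 * k : ℕ)) : ℝ) / 2 = (m + 1 + a) / 2 + k := by
    push_cast
    ring
  have : 0 < Real.Gamma ((m + 1 + a) / 2 + k) := Real.Gamma_pos_of_pos (by positivity)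
  have hdeg_pos : 0 < (Module.finrank ℝ E : ℝ) + (a - 1 + (2 * k : ℕ)) := by
    rw [hE]
    push_cast
    linarith [k.cast_nonneg (α := ℝ), m.cast_nonneg (α := ℝ)]
  have hpolar := integral_mul_exp_neg_norm_sq_of_homogeneous volume
    (P := fun x => |⟪u, x⟫| ^ (a - 1) * ⟪w, x⟫ ^ (2 * k)) hhom hdeg_pos
  rw [integral_abs_inner_rpow_mul_inner_pow_mul_exp_neg_norm_sq_eq_sum_neg_one_pow
      hE hu hw ha hpole, hE, hdeg] at hpolar
  rw [← div_eq_iff (by positivity)] at hpolar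
  rw [← hpolar]
  ring

section Sphere

theorem sphMeasure_real_univ {n : ℕ} (hn : 1 ≤ n) :
    (sphMeasure n).real Set.univ = sigmaS (n - 1) := by
  have : Nonempty (Fin n) := ⟨⟨0, hn⟩⟩
  have hn' : (n : ℝ) ≠ 0 := by positivity
  have hΓ : Real.Gamma ((n : ℝ) / 2) ≠ 0 := (Real.Gamma_pos_of_pos (by positivity)).ne'
  rw [sphMeasure, Measure.toSphere_real_apply_univ, measureReal_def, EuclideanSpace.volume_ball,
    finrank_euclideanSpace_fin, Fintype.card_fin, sigmaS, Nat.cast_pred hn, sub_add_cancel,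
    Real.Gamma_add_one (by positivity), ENNReal.ofReal_one, one_pow, one_mul,
    ENNReal.toReal_ofReal (by positivity), Real.sqrt_eq_rpow,
    ← Real.rpow_mul_natCast Real.pi_pos.le]
  field_simp

lemma sphMeasure_average_eq {n : ℕ} (hn : 1 ≤ n) (f : Sph n → ℂ) :
    (⨍ θ, f θ ∂(sphMeasure n)) = (sigmaS (n - 1) : ℂ)⁻¹ * ∫ θ, f θ ∂(sphMeasure n) := by
  rw [average_eq, sphMeasure_real_univ hn, Complex.real_smul, Complex.ofReal_inv]

/-- The zonal power `θ ↦ ⟨θ, w⟩^{2k}` with pole `w`, divided by `Γ(1/2 + k)`; in this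
normalization the matrix of `M^α` on zonal powers has entries without the factors
`Γ(1/2 + k) / Γ(1/2 + l)`. -/
def zonalPower {n : ℕ} (k : ℕ) (w θ : Sph n) : ℂ :=
  (⟪(w : Euc n), (θ : Euc n)⟫ ^ (2 * k) / Real.Gamma (1 / 2 + k) : ℝ)

lemma smoothSph_zonalPower {n : ℕ} (k : ℕ) (w : Sph n) : SmoothSph (zonalPower k w) :=
  ⟨fun x => (⟪(w : Euc n), x⟫ ^ (2 * k) / Real.Gamma (1 / 2 + k) : ℝ),
    Complex.ofRealCLM.contDiff.comp (((contDiff_const.inner ℝ contDiff_id).pow _).div_const _),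
    fun _ => rfl⟩

/-- The parameters `α ∉ {1, 3, 5, …}`, to which `M^α` extends analytically. -/
def cosineDomain : Set ℂ := {α | ¬ IsPosOdd α}

lemma cosineDomain_eq_compl_range : cosineDomain = (Set.range fun k : ℕ => (2 * k + 1 : ℂ))ᶜ := by
  ext α
  simp [cosineDomain, IsPosOdd, eq_comm]

lemma isOpen_cosineDomain : IsOpen cosineDomain := by
  have h : (fun k : ℕ => (2 * k + 1 : ℂ)) = (Int.cast : ℤ → ℂ) ∘ fun k : ℕ => 2 * (k : ℤ) + 1 := by
    ext k
    simp
  rw [cosineDomain_eq_compl_range, isOpen_compl_iff, h, Set.range_comp]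
  exact Complex.isClosedEmbedding_intCast.isClosedMap _ (isClosed_discrete _)

lemma isPreconnected_cosineDomain : IsPreconnected cosineDomain := by
  rw [cosineDomain_eq_compl_range]
  exact ((Set.countable_range _).isConnected_compl_of_one_lt_rank
    (by simp [Complex.rank_real_complex])).isPreconnected

lemma ofReal_mem_cosineDomain {a : ℝ} (ha : a ∈ Set.Ioo 1 3) : (a : ℂ) ∈ cosineDomain := by
  rintro ⟨k, hk⟩
  have hk : a = (2 * k + 1 : ℕ) := by exact_mod_cast hk
  have h1 : 1 < 2 * k + 1 := by exact_mod_cast hk ▸ ha.1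
  have h3 : 2 * k + 1 < 3 := by exact_mod_cast hk ▸ ha.2
  lia

lemma two_mem_cosineDomain : (2 : ℂ) ∈ cosineDomain := by
  exact_mod_cast ofReal_mem_cosineDomain (a := 2) (by norm_num)

lemma frequently_two_of_forall_ofReal {p : ℂ → Prop} (h : ∀ a : ℝ, a ∈ Set.Ioo 1 3 → p a) :
    ∃ᶠ z in 𝓝[≠] (2 : ℂ), p z := by
  have hlim : Tendsto ((↑) : ℝ → ℂ) (𝓝[≠] 2) (𝓝[≠] ((2 : ℝ) : ℂ)) :=
    Complex.continuous_ofReal.continuousWithinAt.tendsto_nhdsWithin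
      fun a ha => Complex.ofReal_injective.ne ha
  refine hlim.frequently (Eventually.frequently ?_)
  filter_upwards [nhdsWithin_le_nhds (Ioo_mem_nhds (a := 1) (b := 3) (by norm_num) (by norm_num))]
    using h

theorem eqOn_cosineDomain_of_forall_ofReal {F : Type*} [NormedAddCommGroup F] [NormedSpace ℂ F]
    [CompleteSpace F] {f g : ℂ → F} (hf : DifferentiableOn ℂ f cosineDomain)
    (hg : DifferentiableOn ℂ g cosineDomain) (h : ∀ a : ℝ, a ∈ Set.Ioo 1 3 → f a = g a) :
    Set.EqOn f g cosineDomain :=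
  (hf.analyticOnNhd isOpen_cosineDomain).eqOn_of_preconnected_of_frequently_eq
    (hg.analyticOnNhd isOpen_cosineDomain) isPreconnected_cosineDomain two_mem_cosineDomain
    (frequently_two_of_forall_ofReal h)

lemma one_sub_div_two_add_ne_neg_natCast {α : ℂ} (hα : ¬ IsPosOdd α) (l j : ℕ) :
    (1 - α) / 2 + l ≠ -j := fun h =>
  hα ⟨l + j, by push_cast; linear_combination (-2) * h⟩

lemma Gamma_one_sub_div_two_add_ne_zero {α : ℂ} (hα : ¬ IsPosOdd α) (l : ℕ) :
    Complex.Gamma ((1 - α) / 2 + l) ≠ 0 :=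
  Complex.Gamma_ne_zero (one_sub_div_two_add_ne_neg_natCast hα l)

lemma gammaM_ofReal (n : ℕ) (a : ℝ) :
    gammaM n a = (sigmaS (n - 1) * Real.Gamma ((1 - a) / 2) /
      (2 * Real.pi ^ (((n : ℝ) - 1) / 2) * Real.Gamma (a / 2)) : ℝ) := by
  simp only [gammaM, ofReal_div, ofReal_mul, ← Complex.Gamma_ofReal,
    Complex.ofReal_cpow Real.pi_pos.le]
  push_cast
  rfl

lemma abs_cpow_ofReal_sub_one (t a : ℝ) :
    ((|t| : ℝ) : ℂ) ^ ((a : ℂ) - 1) = (|t| ^ (a - 1) : ℝ) := by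
  rw [Complex.ofReal_cpow (abs_nonneg t), ofReal_sub, ofReal_one]

/-- The matrix entries of `M^α` on zonal powers. -/
def zonalCoeff (n k l : ℕ) (α : ℂ) : ℂ :=
  (-1) ^ l * k.choose l * Complex.Gamma ((1 - α) / 2 + l) *
    (Complex.Gamma (((n : ℂ) - 1 + α) / 2 + k))⁻¹

lemma differentiableOn_zonalCoeff (n k l : ℕ) :
    DifferentiableOn ℂ (zonalCoeff n k l) cosineDomain := by
  intro α hα
  have hΓ : DifferentiableAt ℂ (fun α : ℂ => Complex.Gamma ((1 - α) / 2 + l)) α :=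
    DifferentiableAt.comp α (Complex.differentiableAt_Gamma _
      (one_sub_div_two_add_ne_neg_natCast hα l)) (by fun_prop)
  have hΓ' : DifferentiableAt ℂ
      (fun α : ℂ => (Complex.Gamma (((n : ℂ) - 1 + α) / 2 + k))⁻¹) α :=
    DifferentiableAt.comp (g := fun s => (Complex.Gamma s)⁻¹) α
      (Complex.differentiable_one_div_Gamma _) (by fun_prop)
  exact (((differentiableAt_const _).mul hΓ).mul hΓ').differentiableWithinAt

lemma sigmaS_pos (k : ℕ) : 0 < sigmaS k := by
  have : 0 < Real.Gamma (((k : ℝ) + 1) / 2) := Real.Gamma_pos_of_pos (by positivity)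
  unfold sigmaS
  positivity

lemma zonalCoeff_ofReal (n k l : ℕ) (a : ℝ) :
    zonalCoeff n k l a = ((-1) ^ l * k.choose l * Real.Gamma ((1 - a) / 2 + l) *
      (Real.Gamma ((n - 1 + a) / 2 + k))⁻¹ : ℝ) := by
  simp only [zonalCoeff, ofReal_mul, ofReal_inv, ← Complex.Gamma_ofReal]
  push_cast
  rfl

theorem integral_zonalPower_mul_abs_cpow {n : ℕ} (hn : 2 ≤ n) {a : ℝ} (ha : 0 < a)
    (hpole : ∀ j : ℕ, (1 - a) / 2 ≠ -j) (k : ℕ) (w u : Sph n) :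
    ∫ θ, zonalPower k w θ * ((|⟪(θ : Euc n), (u : Euc n)⟫| : ℝ) : ℂ) ^ ((a : ℂ) - 1)
        ∂(sphMeasure n) =
      (2 * (Real.pi ^ (((n : ℝ) - 1) / 2) * Real.Gamma (a / 2) / Real.Gamma ((1 - a) / 2)) : ℝ) *
        ∑ l ∈ Finset.range (k + 1), zonalCoeff n k l a * zonalPower l w u := by
  obtain ⟨m, rfl⟩ := Nat.exists_eq_add_of_le' hn
  have hsphere := integral_sphere_abs_inner_rpow_mul_inner_pow finrank_euclideanSpace_fin
    (norm_eq_of_mem_sphere u) (norm_eq_of_mem_sphere w) ha hpole k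
  have hpi : √Real.pi ^ (m + 1) = Real.pi ^ ((((m + 2 : ℕ) : ℝ) - 1) / 2) := by
    rw [Real.sqrt_eq_rpow, ← Real.rpow_mul_natCast Real.pi_pos.le]
    push_cast
    ring_nf
  have hintegrand (θ : Sph (m + 2)) : zonalPower k w θ *
      ((|⟪(θ : Euc (m + 2)), (u : Euc (m + 2))⟫| : ℝ) : ℂ) ^ ((a : ℂ) - 1) =
      ((|⟪(u : Euc (m + 2)), θ⟫| ^ (a - 1) * ⟪(w : Euc (m + 2)), θ⟫ ^ (2 * k) *
        (Real.Gamma (1 / 2 + k))⁻¹ : ℝ) : ℂ) := by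
    rw [abs_cpow_ofReal_sub_one, zonalPower, ← ofReal_mul, real_inner_comm (u : Euc (m + 2))]
    congr 1
    ring
  have hdim : (((m + 2 : ℕ) : ℝ) - 1 + a) / 2 = (m + 1 + a) / 2 := by
    push_cast
    ring
  have : Real.Gamma (1 / 2 + k) ≠ 0 := (Real.Gamma_pos_of_pos (by positivity)).ne'
  simp_rw [hintegrand, zonalCoeff_ofReal, zonalPower]
  rw [integral_complex_ofReal, integral_mul_const, sphMeasure, hsphere, hpi]
  simp_rw [← ofReal_mul]
  rw [← ofReal_sum, ← ofReal_mul, ofReal_inj, Finset.mul_sum, Finset.mul_sum, Finset.sum_mul]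
  refine Finset.sum_congr rfl fun l _ => ?_
  rw [real_inner_comm, hdim]
  field_simp

theorem cosT_zonalPower {n : ℕ} (hn : 2 ≤ n) {a : ℝ} (ha : 0 < a) (ha' : ¬ IsPosOdd a) (k : ℕ)
    (w u : Sph n) :
    cosT n a (zonalPower k w) u =
      ∑ l ∈ Finset.range (k + 1), zonalCoeff n k l a * zonalPower l w u := by
  have hpole (j : ℕ) : (1 - a) / 2 ≠ -j := fun h => by
    refine one_sub_div_two_add_ne_neg_natCast ha' 0 j ?_
    rw [Nat.cast_zero, add_zero]
    exact_mod_cast h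
  have hΓ : Real.Gamma ((1 - a) / 2) ≠ 0 := Real.Gamma_ne_zero hpole
  have : 0 < Real.Gamma (a / 2) := Real.Gamma_pos_of_pos (by positivity)
  have hσ := sigmaS_pos (n - 1)
  have hcancel : sigmaS (n - 1) * Real.Gamma ((1 - a) / 2) /
      (2 * Real.pi ^ (((n : ℝ) - 1) / 2) * Real.Gamma (a / 2)) * ((sigmaS (n - 1))⁻¹ *
        (2 * (Real.pi ^ (((n : ℝ) - 1) / 2) * Real.Gamma (a / 2) / Real.Gamma ((1 - a) / 2)))) =
      1 := by
    field_simp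
  rw [cosT, sphMeasure_average_eq (by lia), integral_zonalPower_mul_abs_cpow hn ha hpole,
    gammaM_ofReal, ← ofReal_inv, ← mul_assoc (ofReal (sigmaS _)⁻¹), ← mul_assoc, ← ofReal_mul,
    ← ofReal_mul, hcancel, ofReal_one, one_mul]

lemma zonalCoeff_eq_zero_of_lt {k l : ℕ} (hkl : k < l) (n : ℕ) (α : ℂ) :
    zonalCoeff n k l α = 0 := by
  simp [zonalCoeff, Nat.choose_eq_zero_of_lt hkl]

theorem sum_zonalCoeff_mul_zonalCoeff {n : ℕ} {α β : ℂ} (hα : ¬ IsPosOdd α) (hβ : ¬ IsPosOdd β)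
    (hαβ : α + β = 2 - n) (k m : ℕ) :
    ∑ l ∈ Finset.range (k + 1), zonalCoeff n k l α * zonalCoeff n l m β =
      if k = m then 1 else 0 := by
  have hα' : ((n : ℂ) - 1 + α) / 2 = (1 - β) / 2 := by linear_combination hαβ / 2
  have hβ' : ((n : ℂ) - 1 + β) / 2 = (1 - α) / 2 := by linear_combination hαβ / 2
  have hterm (l : ℕ) : zonalCoeff n k l α * zonalCoeff n l m β =
      (-1) ^ l * k.choose l * ((-1) ^ m * l.choose m) *
        (Complex.Gamma ((1 - β) / 2 + m) / Complex.Gamma ((1 - β) / 2 + k)) := by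
    have := Gamma_one_sub_div_two_add_ne_zero hα l
    rw [zonalCoeff, zonalCoeff, hα', hβ']
    generalize Complex.Gamma ((1 - α) / 2 + l) = Γ at *
    field_simp
  simp_rw [hterm]
  rw [← Finset.sum_mul, sum_neg_one_pow_mul_choose_mul_choose]
  split_ifs with hkm
  · rw [hkm, div_self (Gamma_one_sub_div_two_add_ne_zero hβ m), one_mul]
  · rw [zero_mul]

lemma multM_mul_multM {n : ℕ} {α β : ℂ} (hα : ¬ IsPosOdd α) (hβ : ¬ IsPosOdd β)
    (hαβ : α + β = 2 - n) {j : ℕ} (hj : Even j) : multM n j α * multM n j β = 1 := by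
  obtain ⟨k, rfl⟩ := hj.exists_two_nsmul
  have hα' : ((n : ℂ) - 1 + α) / 2 = (1 - β) / 2 := by linear_combination hαβ / 2
  have hβ' : ((n : ℂ) - 1 + β) / 2 = (1 - α) / 2 := by linear_combination hαβ / 2
  have hΓα := Gamma_one_sub_div_two_add_ne_zero hα k
  have hΓβ := Gamma_one_sub_div_two_add_ne_zero hβ k
  have hk : ((2 • k : ℕ) : ℂ) / 2 = k := by simp
  have hsign : (-1 : ℂ) ^ (2 • k / 2) * (-1) ^ (2 • k / 2) = 1 := by simp [← mul_pow]
  rw [multM, multM, hα', hβ', hk, add_comm (k : ℂ), add_comm (k : ℂ), div_mul_div_comm,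
    mul_mul_mul_comm, hsign, one_mul, mul_comm (Complex.Gamma _) (Complex.Gamma ((1 - β) / 2 + k)),
    div_self (mul_ne_zero hΓβ hΓα)]

namespace CosineFamily

variable {n : ℕ} (MF : CosineFamily n)

lemma M_ofReal {a : ℝ} (ha : a ∈ Set.Ioo 1 3) {f : Sph n → ℂ} (hf : SmoothSph f) (u : Sph n) :
    MF.M a f u = cosT n a f u :=
  MF.formula (zero_lt_one.trans ha.1) (ofReal_mem_cosineDomain ha) hf u

theorem M_zonalPower (hn : 2 ≤ n) {α : ℂ} (hα : ¬ IsPosOdd α) (k : ℕ) (w : Sph n) :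
    MF.M α (zonalPower k w) =
      ∑ l ∈ Finset.range (k + 1), zonalCoeff n k l α • zonalPower l w := by
  ext u
  simp only [Finset.sum_apply, Pi.smul_apply, smul_eq_mul]
  refine eqOn_cosineDomain_of_forall_ofReal (f := fun α => MF.M α (zonalPower k w) u)
    (MF.analytic (smoothSph_zonalPower k w) u)
    (.fun_sum fun l _ => (differentiableOn_zonalCoeff n k l).mul_const _) (fun a ha => ?_) hα
  exact (MF.M_ofReal ha (smoothSph_zonalPower k w) u).trans
    (cosT_zonalPower hn (zero_lt_one.trans ha.1) (ofReal_mem_cosineDomain ha) k w u)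

theorem M_M_zonalPower (hn : 2 ≤ n) {α β : ℂ} (hα : ¬ IsPosOdd α) (hβ : ¬ IsPosOdd β)
    (hαβ : α + β = 2 - n) (k : ℕ) (w : Sph n) :
    MF.M β (MF.M α (zonalPower k w)) = zonalPower k w := by
  have hMβ : ∀ l ∈ Finset.range (k + 1), MF.M β (zonalPower l w) =
      ∑ m ∈ Finset.range (k + 1), zonalCoeff n l m β • zonalPower m w := fun l hl => by
    rw [MF.M_zonalPower hn hβ]
    refine Finset.sum_subset (Finset.range_mono (Finset.mem_range.1 hl)) fun m _ hm => ?_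
    rw [zonalCoeff_eq_zero_of_lt (by simpa using hm), zero_smul]
  calc MF.M β (MF.M α (zonalPower k w))
      = ∑ l ∈ Finset.range (k + 1), zonalCoeff n k l α • MF.M β (zonalPower l w) := by
        rw [MF.M_zonalPower hn hα]
        exact (map_sum ((MF.linear β).mk' _) _ _).trans
          (Finset.sum_congr rfl fun l _ => (MF.linear β).map_smul _ _)
    _ = ∑ m ∈ Finset.range (k + 1), (∑ l ∈ Finset.range (k + 1),
          zonalCoeff n k l α * zonalCoeff n l m β) • zonalPower m w := by
        simp_rw [Finset.sum_smul, mul_smul]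
        rw [Finset.sum_comm]
        exact Finset.sum_congr rfl fun l hl => by rw [hMβ l hl, Finset.smul_sum]
    _ = zonalPower k w := by
        simp_rw [sum_zonalCoeff_mul_zonalCoeff hα hβ hαβ]
        simp

end CosineFamily

end Sphere

section Rotation

variable {E : Type*} [NormedAddCommGroup E]

/-- The homeomorphism of the unit sphere induced by a linear isometry; for `E = ℝ^n` this is the
action of the orthogonal group on `S^{n-1}`. -/
def sphereHomeomorph [NormedSpace ℝ E] (R : E ≃ₗᵢ[ℝ] E) : sphere (0 : E) 1 ≃ₜ sphere (0 : E) 1 :=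
  R.toHomeomorph.sets (by ext; simp)

@[simp]
lemma coe_sphereHomeomorph [NormedSpace ℝ E] (R : E ≃ₗᵢ[ℝ] E) (x : sphere (0 : E) 1) :
    (sphereHomeomorph R x : E) = R x :=
  rfl

open scoped Pointwise in
lemma smul_image_coe_preimage_sphereHomeomorph [NormedSpace ℝ E] (R : E ≃ₗᵢ[ℝ] E) (I : Set ℝ)
    (s : Set (sphere (0 : E) 1)) :
    I • ((↑) '' (sphereHomeomorph R ⁻¹' s) : Set E) = R ⁻¹' (I • ((↑) '' s)) := by
  have himage : ((↑) '' (sphereHomeomorph R ⁻¹' s) : Set E) = R.symm '' ((↑) '' s) := by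
    rw [← Homeomorph.image_symm, Set.image_image, Set.image_image]
    rfl
  have hpreimage (A : Set E) : R ⁻¹' A = R.symm '' A :=
    (R.toEquiv.image_symm_eq_preimage A).symm
  rw [himage, hpreimage, ← Set.image2_smul, ← Set.image2_smul,
    Set.image_image2_distrib_right fun r x => R.symm.map_smul r x]

theorem measurePreserving_sphereHomeomorph [NormedSpace ℝ E] [MeasurableSpace E] [BorelSpace E]
    {μ : Measure E} {R : E ≃ₗᵢ[ℝ] E} (hR : MeasurePreserving R μ μ) :
    MeasurePreserving (sphereHomeomorph R) μ.toSphere μ.toSphere := by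
  refine ⟨(sphereHomeomorph R).continuous.measurable, ?_⟩
  ext s hs
  rw [(sphereHomeomorph R).measurableEmbedding.map_apply, μ.toSphere_apply' hs,
    μ.toSphere_apply' ((sphereHomeomorph R).continuous.measurable hs),
    smul_image_coe_preimage_sphereHomeomorph,
    hR.measure_preimage_emb R.toHomeomorph.measurableEmbedding]

theorem exists_sphereHomeomorph_eq [InnerProductSpace ℝ E] (u v : sphere (0 : E) 1) :
    ∃ R : E ≃ₗᵢ[ℝ] E, sphereHomeomorph R u = v :=
  ⟨(Submodule.span ℝ {(u : E) - v})ᗮ.reflection, Subtype.ext <| Submodule.reflection_sub <| by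
    rw [norm_eq_of_mem_sphere, norm_eq_of_mem_sphere]⟩

variable {n : ℕ}

lemma integral_comp_sphereHomeomorph (R : Euc n ≃ₗᵢ[ℝ] Euc n) (f : Sph n → ℂ) :
    ∫ θ, f (sphereHomeomorph R θ) ∂(sphMeasure n) = ∫ θ, f θ ∂(sphMeasure n) :=
  (measurePreserving_sphereHomeomorph R.measurePreserving).integral_comp
    (sphereHomeomorph R).measurableEmbedding f

lemma SmoothSph.comp_sphereHomeomorph {f : Sph n → ℂ} (hf : SmoothSph f)
    (R : Euc n ≃ₗᵢ[ℝ] Euc n) : SmoothSph (f ∘ sphereHomeomorph R) := by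
  obtain ⟨F, hF, hfF⟩ := hf
  exact ⟨F ∘ R, hF.comp R.contDiff, fun x => hfF _⟩

lemma cosT_comp_sphereHomeomorph (hn : 1 ≤ n) (α : ℂ) (f : Sph n → ℂ) (R : Euc n ≃ₗᵢ[ℝ] Euc n)
    (u : Sph n) : cosT n α (f ∘ sphereHomeomorph R) u = cosT n α f (sphereHomeomorph R u) := by
  rw [cosT, cosT, sphMeasure_average_eq hn, sphMeasure_average_eq hn,
    ← integral_comp_sphereHomeomorph R fun θ =>
      f θ * ((|⟪(θ : Euc n), sphereHomeomorph R u⟫| : ℝ) : ℂ) ^ (α - 1)]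
  simp

theorem CosineFamily.M_comp_sphereHomeomorph (MF : CosineFamily n) (hn : 1 ≤ n) {α : ℂ}
    (hα : ¬ IsPosOdd α) {f : Sph n → ℂ} (hf : SmoothSph f) (R : Euc n ≃ₗᵢ[ℝ] Euc n) (u : Sph n) :
    MF.M α (f ∘ sphereHomeomorph R) u = MF.M α f (sphereHomeomorph R u) := by
  have hfR := hf.comp_sphereHomeomorph R
  refine eqOn_cosineDomain_of_forall_ofReal (f := fun α => MF.M α (f ∘ sphereHomeomorph R) u)
    (g := fun α => MF.M α f (sphereHomeomorph R u)) (MF.analytic hfR u) (MF.analytic hf _)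
    (fun a ha => ?_) hα
  simp_rw [MF.M_ofReal ha hf, MF.M_ofReal ha hfR, cosT_comp_sphereHomeomorph hn]

end Rotation

section Superposition

open scoped lp

lemma SmoothSph.continuous {n : ℕ} {V : Type*} [NormedAddCommGroup V] [NormedSpace ℝ V]
    {f : Sph n → V} (hf : SmoothSph f) : Continuous f := by
  obtain ⟨F, hF, hfF⟩ := hf
  exact (hF.continuous.comp continuous_subtype_val).congr fun x => (hfF x).symm

lemma SmoothSph.exists_extension_norm_iteratedFDeriv_le {n : ℕ} {V : Type*} [NormedAddCommGroup V]
    [NormedSpace ℝ V] {f : Sph n → V} (hf : SmoothSph f) :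
    ∃ F : Euc n → V, ContDiff ℝ (⊤ : ℕ∞) F ∧ (∀ x : Sph n, f x = F x) ∧
      ∃ B : ℕ → ℝ, ∀ k x, ‖iteratedFDeriv ℝ k F x‖ ≤ B k := by
  obtain ⟨F, hF, hfF⟩ := hf
  let χ : ContDiffBump (0 : Euc n) := ⟨1, 2, one_pos, one_lt_two⟩
  have hχF : ContDiff ℝ (⊤ : ℕ∞) (fun x => χ x • F x) := χ.contDiff.smul hF
  have hsupp : HasCompactSupport (fun x => χ x • F x) := χ.hasCompactSupport.smul_right
  choose B hB using fun k : ℕ => (hχF.continuous_iteratedFDeriv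
    (m := k) (by exact_mod_cast le_top)).bounded_above_of_compact_support (hsupp.iteratedFDeriv k)
  refine ⟨_, hχF, fun x => ?_, B, hB⟩
  rw [χ.one_of_mem_closedBall (by simp [χ]), one_smul, hfF]

lemma norm_cosT_le {n : ℕ} {a B : ℝ} (ha : 1 ≤ a) {f : Sph n → ℂ} (hB : ∀ x, ‖f x‖ ≤ B)
    (u : Sph n) : ‖cosT n a f u‖ ≤ ‖gammaM n a‖ * B := by
  have hB₀ : 0 ≤ B := (norm_nonneg _).trans (hB u)
  have hkernel (θ : Sph n) :
      ‖((|⟪(θ : Euc n), (u : Euc n)⟫| : ℝ) : ℂ) ^ ((a : ℂ) - 1)‖ ≤ 1 := by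
    rw [abs_cpow_ofReal_sub_one, Complex.norm_real, Real.norm_of_nonneg (by positivity)]
    refine Real.rpow_le_one (abs_nonneg _) ?_ (sub_nonneg.2 ha)
    simpa using abs_real_inner_le_norm (θ : Euc n) u
  rw [cosT, norm_mul, average_eq']
  gcongr
  refine (norm_integral_le_of_norm_le_const (.of_forall fun θ => ?_)).trans
    (mul_le_of_le_one_right hB₀ measureReal_le_one)
  rw [norm_mul]
  exact (mul_le_mul (hB θ) (hkernel θ) (norm_nonneg _) hB₀).trans_eq (mul_one B)

lemma SmoothSph.exists_forall_norm_le {n : ℕ} {V : Type*} [NormedAddCommGroup V]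
    [NormedSpace ℝ V] {f : Sph n → V} (hf : SmoothSph f) : ∃ B, ∀ x, ‖f x‖ ≤ B := by
  simpa using isCompact_univ.exists_bound_of_continuousOn hf.continuous.continuousOn

lemma summable_norm_coe_lp_one {ι E : Type*} [NormedAddCommGroup E] (c : ℓ¹(ι, E)) :
    Summable fun i => ‖c i‖ := by
  simpa using (lp.memℓp c).summable (by simp)

lemma tsum_norm_coe_lp_one {ι E : Type*} [NormedAddCommGroup E] (c : ℓ¹(ι, E)) :
    ∑' i, ‖c i‖ = ‖c‖ := by
  simpa using (lp.norm_eq_tsum_rpow (p := 1) (by simp) c).symm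

lemma norm_mul_le_mul_of_norm_le {R : Type*} [NonUnitalSeminormedRing R] {B : ℝ} (a : R) {b : R}
    (hb : ‖b‖ ≤ B) : ‖a * b‖ ≤ ‖a‖ * B :=
  (norm_mul_le a b).trans (mul_le_mul_of_nonneg_left hb (norm_nonneg a))

lemma summable_norm_lp_one_mul {ι R : Type*} [NormedRing R] {B : ℝ} (c : ℓ¹(ι, R)) {g : ι → R}
    (hg : ∀ i, ‖g i‖ ≤ B) : Summable fun i => ‖c i * g i‖ :=
  .of_nonneg_of_le (fun _ => norm_nonneg _) (fun i => norm_mul_le_mul_of_norm_le _ (hg i))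
    ((summable_norm_coe_lp_one c).mul_right B)

lemma norm_tsum_lp_one_mul_le {ι R : Type*} [NormedRing R] {B : ℝ} (c : ℓ¹(ι, R)) {g : ι → R}
    (hg : ∀ i, ‖g i‖ ≤ B) : ‖∑' i, c i * g i‖ ≤ ‖c‖ * B := by
  have hsum := summable_norm_lp_one_mul c hg
  calc ‖∑' i, c i * g i‖
      ≤ ∑' i, ‖c i * g i‖ := norm_tsum_le_tsum_norm hsum
    _ ≤ ∑' i, ‖c i‖ * B := hsum.tsum_le_tsum (fun i => norm_mul_le_mul_of_norm_le _ (hg i))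
        ((summable_norm_coe_lp_one c).mul_right B)
    _ = ‖c‖ * B := by rw [tsum_mul_right, tsum_norm_coe_lp_one]

variable {n : ℕ} {f : Sph n → ℂ}

/-- The superposition `∑_R c_R (f ∘ R)` of rotates of `f` with absolutely summable
coefficients. -/
def rotationSuperposition (f : Sph n → ℂ) (c : ℓ¹(Euc n ≃ₗᵢ[ℝ] Euc n, ℂ)) (θ : Sph n) : ℂ :=
  ∑' R, c R * f (sphereHomeomorph R θ)

lemma norm_rotationSuperposition_le {B : ℝ} (hB : ∀ x, ‖f x‖ ≤ B)
    (c : ℓ¹(Euc n ≃ₗᵢ[ℝ] Euc n, ℂ)) (θ : Sph n) : ‖rotationSuperposition f c θ‖ ≤ ‖c‖ * B :=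
  norm_tsum_lp_one_mul_le c fun _ => hB _

lemma isLinearMap_rotationSuperposition {B : ℝ} (hB : ∀ x, ‖f x‖ ≤ B) :
    IsLinearMap ℂ (rotationSuperposition f) where
  map_add c d := by
    ext θ
    simp only [rotationSuperposition, lp.coeFn_add, Pi.add_apply, add_mul]
    exact (summable_norm_lp_one_mul c fun _ => hB _).of_norm.tsum_add
      (summable_norm_lp_one_mul d fun _ => hB _).of_norm
  map_smul r c := by
    ext θ
    simp only [rotationSuperposition, lp.coeFn_smul, Pi.smul_apply, smul_eq_mul, mul_assoc,
      tsum_mul_left]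

lemma SmoothSph.rotationSuperposition (hf : SmoothSph f) (c : ℓ¹(Euc n ≃ₗᵢ[ℝ] Euc n, ℂ)) :
    SmoothSph (rotationSuperposition f c) := by
  obtain ⟨F, hF, hfF, B, hB⟩ := hf.exists_extension_norm_iteratedFDeriv_le
  have hFR (R : Euc n ≃ₗᵢ[ℝ] Euc n) : ContDiff ℝ (⊤ : ℕ∞) (F ∘ R) := hF.comp R.contDiff
  refine ⟨fun x => ∑' R, (c R • (F ∘ R)) x, ?_, fun x => tsum_congr fun R => by simp [hfF]⟩
  refine contDiff_tsum (v := fun k R => ‖c R‖ * B k) (fun R => contDiff_const.smul (hFR R))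
    (fun k _ => (summable_norm_coe_lp_one c).mul_right _) fun k R x hk => ?_
  rw [iteratedFDeriv_const_smul_apply ((hFR R).contDiffAt.of_le (by exact_mod_cast hk)),
    norm_smul, R.norm_iteratedFDeriv_comp_right]
  exact mul_le_mul_of_nonneg_left (hB _ _) (norm_nonneg _)

open scoped Classical in
lemma rotationSuperposition_single (f : Sph n → ℂ) (R : Euc n ≃ₗᵢ[ℝ] Euc n) :
    rotationSuperposition f (lp.single 1 R 1) = f ∘ sphereHomeomorph R := by
  ext θ
  rw [rotationSuperposition, tsum_eq_single R fun R' hR' => by simp [hR']]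
  simp

end Superposition

section Symmetry

variable {n : ℕ}

instance : IsFiniteMeasure (sphMeasure n) :=
  inferInstanceAs (IsFiniteMeasure (volume : Measure (Euc n)).toSphere)

theorem integral_integral_mul_comm_of_symm {X : Type*} [TopologicalSpace X] [CompactSpace X]
    [MeasurableSpace X] [OpensMeasurableSpace X] {μ : Measure X} [IsFiniteMeasureOnCompacts μ]
    {K : X → X → ℂ} (hK : Continuous K.uncurry) (hsymm : ∀ x y, K x y = K y x) {f g : X → ℂ}
    (hf : Continuous f) (hg : Continuous g) :
    ∫ y, (∫ x, f x * K x y ∂μ) * g y ∂μ = ∫ x, f x * (∫ y, g y * K y x ∂μ) ∂μ := by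
  simp_rw [← integral_mul_const, ← integral_const_mul]
  rw [integral_integral_swap_of_hasCompactSupport _ (.of_compactSpace _)]
  · refine integral_congr_ae (.of_forall fun x => integral_congr_ae (.of_forall fun y => ?_))
    simp only [hsymm x y, mul_assoc, mul_comm (g y)]
  · exact ((hf.comp continuous_snd).mul (hK.comp continuous_swap)).mul (hg.comp continuous_fst)

lemma integral_cosT_mul_comm (hn : 1 ≤ n) {a : ℝ} (ha : 1 < a) {f g : Sph n → ℂ}
    (hf : Continuous f) (hg : Continuous g) :
    ∫ u, cosT n a f u * g u ∂(sphMeasure n) = ∫ u, f u * cosT n a g u ∂(sphMeasure n) := by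
  have hker : Continuous fun p : Sph n × Sph n =>
      ((|⟪(p.1 : Euc n), (p.2 : Euc n)⟫| : ℝ) : ℂ) ^ ((a : ℂ) - 1) :=
    (Complex.continuous_ofReal_cpow_const (by simpa using ha)).comp (by fun_prop)
  have hcosT (h : Sph n → ℂ) (u : Sph n) : cosT n a h u =
      gammaM n a * (sigmaS (n - 1) : ℂ)⁻¹ *
        ∫ θ, h θ * ((|⟪(θ : Euc n), (u : Euc n)⟫| : ℝ) : ℂ) ^ ((a : ℂ) - 1) ∂(sphMeasure n) := by
    rw [cosT, sphMeasure_average_eq hn, mul_assoc]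
  simp_rw [hcosT, mul_assoc (gammaM n a * _), mul_left_comm (f _), integral_const_mul]
  congr 1
  exact integral_integral_mul_comm_of_symm hker (fun x y => by rw [real_inner_comm]) hf hg

namespace CosineFamily

variable (MF : CosineFamily n) {f g : Sph n → ℂ}

open scoped Classical lp in
theorem eventually_norm_M_le (hn : 1 ≤ n) (hf : SmoothSph f) {α : ℂ} (hα : ¬ IsPosOdd α) :
    ∃ C, ∀ᶠ w in 𝓝 α, ∀ u, ‖MF.M w f u‖ ≤ C := by
  rcases isEmpty_or_nonempty (Sph n) with _ | ⟨⟨u₀⟩⟩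
  · exact ⟨0, .of_forall fun _ u => isEmptyElim u⟩
  obtain ⟨B, hB⟩ := hf.exists_forall_norm_le
  let T (w : ℂ) : ℓ¹(Euc n ≃ₗᵢ[ℝ] Euc n, ℂ) →ₗ[ℂ] ℂ :=
    LinearMap.proj u₀ ∘ₗ (MF.linear w).mk' _ ∘ₗ (isLinearMap_rotationSuperposition hB).mk' _
  have hT_cont (a : ℝ) (ha : a ∈ Set.Ioo 1 3) : Continuous (T a) := by
    refine AddMonoidHomClass.continuous_of_bound (T a) (‖gammaM n a‖ * B) fun c => ?_
    rw [mul_assoc, mul_comm B]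
    refine (congrArg norm (MF.M_ofReal ha (hf.rotationSuperposition c) u₀)).trans_le ?_
    exact norm_cosT_le ha.1.le (norm_rotationSuperposition_le hB c) u₀
  obtain ⟨C, hC⟩ := eventually_bounded_of_frequently_continuous (T := T) isOpen_cosineDomain
    isPreconnected_cosineDomain two_mem_cosineDomain
    (fun c => MF.analytic (hf.rotationSuperposition c) u₀)
    (frequently_two_of_forall_ofReal hT_cont) hα
  refine ⟨C, ?_⟩
  filter_upwards [hC, isOpen_cosineDomain.mem_nhds hα] with w hw hwdom u
  obtain ⟨R, rfl⟩ := exists_sphereHomeomorph_eq u₀ u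
  have hTR : T w (lp.single 1 R 1) = MF.M w f (sphereHomeomorph R u₀) := by
    rw [← MF.M_comp_sphereHomeomorph hn hwdom hf, ← rotationSuperposition_single]
    rfl
  simpa [← hTR, lp.norm_single] using hw (lp.single 1 R 1)

lemma differentiableOn_integral_M_mul (hn : 1 ≤ n) (hf : SmoothSph f) (hg : SmoothSph g) :
    DifferentiableOn ℂ (fun α => ∫ u, MF.M α f u * g u ∂(sphMeasure n)) cosineDomain := by
  refine differentiableOn_integral_of_locally_bounded isOpen_cosineDomain
    (fun α hα => ((MF.smooth hα hf).continuous.mul hg.continuous).aestronglyMeasurable)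
    (fun u => (MF.analytic hf u).mul_const _) fun α hα => ?_
  obtain ⟨B, hB⟩ := hg.exists_forall_norm_le
  obtain ⟨C, hC⟩ := MF.eventually_norm_M_le hn hf hα
  refine ⟨C * B, hC.mono fun w hw u => ?_⟩
  exact (norm_mul_le_mul_of_norm_le _ (hB u)).trans
    (mul_le_mul_of_nonneg_right (hw u) ((norm_nonneg _).trans (hB u)))

theorem integral_M_mul_comm (hn : 1 ≤ n) {α : ℂ} (hα : ¬ IsPosOdd α) (hf : SmoothSph f)
    (hg : SmoothSph g) :
    ∫ u, MF.M α f u * g u ∂(sphMeasure n) = ∫ u, f u * MF.M α g u ∂(sphMeasure n) := by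
  simp_rw [mul_comm (f _)]
  refine eqOn_cosineDomain_of_forall_ofReal (MF.differentiableOn_integral_M_mul hn hf hg)
    (MF.differentiableOn_integral_M_mul hn hg hf) (fun a ha => ?_) hα
  simp_rw [MF.M_ofReal ha hf, MF.M_ofReal ha hg, mul_comm _ (f _)]
  exact integral_cosT_mul_comm hn ha.1 hf.continuous hg.continuous

end CosineFamily

end Symmetry

section Completeness

variable {n : ℕ}

instance : (sphMeasure n).IsOpenPosMeasure :=
  inferInstanceAs (volume : Measure (Euc n)).toSphere.IsOpenPosMeasure

theorem integral_eval_smul_eq_zero {X F : Type*} [TopologicalSpace X] [CompactSpace X]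
    [MeasurableSpace X] [OpensMeasurableSpace X] {μ : Measure X} [IsFiniteMeasureOnCompacts μ]
    [NormedAddCommGroup F] [NormedSpace ℝ F] {c : X → ℝ} {f : X → F} (hc : Continuous c)
    (hf : Continuous f) (h : ∀ j : ℕ, ∫ x, c x ^ j • f x ∂μ = 0) (p : Polynomial ℝ) :
    ∫ x, p.eval (c x) • f x ∂μ = 0 := by
  induction p using Polynomial.induction_on' with
  | add p q hp hq =>
    have hint (r : Polynomial ℝ) : Integrable (fun x => r.eval (c x) • f x) μ :=
      ((r.continuous.comp hc).smul hf).integrable_of_hasCompactSupport (.of_compactSpace _)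
    simp_rw [Polynomial.eval_add, add_smul]
    rw [integral_add (hint p) (hint q), hp, hq, add_zero]
  | monomial j a =>
    simp_rw [Polynomial.eval_monomial, mul_smul]
    rw [integral_smul, h, smul_zero]

theorem eq_zero_of_forall_integral_inner_pow_smul_eq_zero {F : Type*} [NormedAddCommGroup F]
    [NormedSpace ℝ F] [CompleteSpace F] {f : Sph n → F} (hf : Continuous f) (w : Sph n)
    (h : ∀ j : ℕ, ∫ u : Sph n, ⟪(w : Euc n), (u : Euc n)⟫ ^ j • f u ∂(sphMeasure n) = 0) :
    f w = 0 := by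
  have hc : Continuous fun u : Sph n => ⟪(w : Euc n), (u : Euc n)⟫ := by fun_prop
  have hinner_self : ⟪(w : Euc n), (w : Euc n)⟫ = 1 := by simp
  have hpow (k : ℕ) :
      ∫ u : Sph n, (1 + ⟪(w : Euc n), (u : Euc n)⟫) ^ k • f u ∂(sphMeasure n) = 0 := by
    simpa using integral_eval_smul_eq_zero hc hf h ((1 + .X) ^ k)
  have hpeak := tendsto_setIntegral_pow_smul_of_unique_maximum_of_isCompact_of_continuousOn
    (μ := sphMeasure n) (x₀ := w) isCompact_univ (hc.const_add 1).continuousOn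
    (fun u _ hu => ?_) (fun u _ => ?_) (by norm_num [hinner_self]) (by simp) hf.continuousOn
  · simp only [Measure.restrict_univ, hpow, smul_zero] at hpeak
    exact tendsto_nhds_unique hpeak tendsto_const_nhds
  · rw [hinner_self]
    gcongr
    exact (inner_lt_one_iff_real_of_norm_eq_one (by simp) (by simp)).2 fun h =>
      hu (Subtype.ext h.symm)
  · have := neg_one_le_real_inner_of_norm_eq_one (x := (w : Euc n)) (y := u) (by simp) (by simp)
    linarith

lemma integral_sphere_eq_zero_of_odd {f : Sph n → ℂ} (hf : ∀ x, f (-x) = -f x) :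
    ∫ x, f x ∂(sphMeasure n) = 0 := by
  have hneg : ∫ x, f (-x) ∂(sphMeasure n) = ∫ x, f x ∂(sphMeasure n) :=
    integral_comp_sphereHomeomorph (LinearIsometryEquiv.neg ℝ) f
  simp_rw [hf, integral_neg] at hneg
  exact self_eq_neg.1 hneg.symm

lemma integral_mul_zonalPower (f : Sph n → ℂ) (k : ℕ) (w : Sph n) :
    ∫ u, f u * zonalPower k w u ∂(sphMeasure n) = (Real.Gamma (1 / 2 + k))⁻¹ •
      ∫ u : Sph n, ⟪(w : Euc n), (u : Euc n)⟫ ^ (2 * k) • f u ∂(sphMeasure n) := by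
  rw [← integral_smul]
  congr! 2 with u
  rw [zonalPower, smul_smul, Complex.real_smul, mul_comm, div_eq_inv_mul]

theorem eq_zero_of_forall_integral_mul_zonalPower_eq_zero {f : Sph n → ℂ} (hf : Continuous f)
    (heven : EvenSph f) (h : ∀ k w, ∫ u, f u * zonalPower k w u ∂(sphMeasure n) = 0) : f = 0 := by
  ext w
  refine eq_zero_of_forall_integral_inner_pow_smul_eq_zero hf w fun j => ?_
  rcases j.even_or_odd with hj | hj
  · obtain ⟨k, rfl⟩ := hj.exists_two_nsmul
    have hΓ : Real.Gamma (1 / 2 + k) ≠ 0 := (Real.Gamma_pos_of_pos (by positivity)).ne'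
    rw [smul_eq_mul]
    exact (smul_eq_zero.1 ((integral_mul_zonalPower f k w).symm.trans (h k w))).resolve_left
      (inv_ne_zero hΓ)
  · refine integral_sphere_eq_zero_of_odd fun u => ?_
    rw [heven, coe_neg_sphere, inner_neg_right, hj.neg_pow, neg_smul]

theorem eq_of_forall_integral_mul_zonalPower_eq {f g : Sph n → ℂ} (hf : Continuous f)
    (hg : Continuous g) (hf_even : EvenSph f) (hg_even : EvenSph g)
    (h : ∀ k w, ∫ u, f u * zonalPower k w u ∂(sphMeasure n) =
      ∫ u, g u * zonalPower k w u ∂(sphMeasure n)) : f = g := by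
  refine sub_eq_zero.1 <| eq_zero_of_forall_integral_mul_zonalPower_eq_zero (hf.sub hg)
    (fun x => congrArg₂ (· - ·) (hf_even x) (hg_even x)) fun k w => ?_
  have hint {φ : Sph n → ℂ} (hφ : Continuous φ) :
      Integrable (fun u => φ u * zonalPower k w u) (sphMeasure n) :=
    (hφ.mul (smoothSph_zonalPower k w).continuous).integrable_of_hasCompactSupport
      (.of_compactSpace _)
  simp_rw [Pi.sub_apply, sub_mul]
  rw [integral_sub (hint hf) (hint hg), h, sub_self]

end Completeness

/-- If `α + β = 2 - n` (`α, β ∉ {1,3,5,…}`), then `M^α M^β = I`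
on `D_e(S^{n-1})`;  equivalently, `m_{j,α} m_{j,β} = 1` for all even `j`. -/
theorem cosine_transform_composition_inverse (n : ℕ) (hn : 2 ≤ n) (MF : CosineFamily n)
    (α β : ℂ) (hα : ¬ IsPosOdd α) (hβ : ¬ IsPosOdd β) (hαβ : α + β = 2 - n) :
    (∀ f : Sph n → ℂ, SmoothSph f → EvenSph f → MF.M α (MF.M β f) = f) ∧
      ∀ j : ℕ, Even j → multM n j α * multM n j β = 1 := by
  refine ⟨fun f hf hf_even => ?_, fun j hj => multM_mul_multM hα hβ hαβ hj⟩
  have hn₁ : 1 ≤ n := one_le_two.trans hn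
  have hβf : SmoothSph (MF.M β f) := MF.smooth hβ hf
  refine eq_of_forall_integral_mul_zonalPower_eq (MF.smooth hα hβf).continuous hf.continuous
    (MF.even hα hβf) hf_even fun k w => ?_
  have hs : SmoothSph (zonalPower k w) := smoothSph_zonalPower k w
  calc ∫ u, MF.M α (MF.M β f) u * zonalPower k w u ∂(sphMeasure n)
      = ∫ u, MF.M β f u * MF.M α (zonalPower k w) u ∂(sphMeasure n) :=
        MF.integral_M_mul_comm hn₁ hα hβf hs
    _ = ∫ u, f u * MF.M β (MF.M α (zonalPower k w)) u ∂(sphMeasure n) :=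
        MF.integral_M_mul_comm hn₁ hβ hf (MF.smooth hα hs)
    _ = ∫ u, f u * zonalPower k w u ∂(sphMeasure n) := by
        rw [MF.M_M_zonalPower hn hα hβ hαβ]

end
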